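/- arXiv:math/0510500 — 3 statements merged into one kernel-verified Lean document; each statement's English description precedes it below -/
import Mathlib

section
/- Let r ≥ 2 be a natural number, let w : Fin (r-2) → (Fin r → ℝ) be a tuple of r−2 vectors in ℝ^r, and for x, y ∈ (Fin r → ℝ) write [x y] for the determinant of the r×r real matrix whose first r−2 columns are w 0, …, w (r−3) and whose last two columns are x and y. Then for all vectors a, b, c, d ∈ (Fin r → ℝ): [a b]·[c d] − [a c]·[b d] + [a d]·[b c] = 0. -/
/-!
Cramer's rule `A *ᵥ cramer A v = det A • v` expands `det A • v` in the columns of `A`. Applying the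
linear form `x ↦ det (B.updateCol p x)` gives an exchange relation between the determinants of
`A` and `B`. If `A` and `B` agree outside the columns `p` and `q`, every other column of `A` is
repeated in the matrix it is inserted into, so only the terms at `p` and `q` survive.
-/

/-- The bracket `[x y]`: the determinant of the `r × r` real matrix whose first
`r - 2` columns are `w 0, …, w (r-3)` and whose last two columns are `x` and `y`. -/
noncomputable def bracket (r : ℕ) (w : Fin (r - 2) → (Fin r → ℝ)) (x y : Fin r → ℝ) : ℝ :=
  Matrix.det (Matrix.of fun i j : Fin r =>
    if h : (j : ℕ) < r - 2 then w ⟨j, h⟩ i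
    else if (j : ℕ) = r - 2 then x i else y i)

section ColumnBracket

open Matrix

variable {n R : Type*} [Fintype n] [DecidableEq n] [CommRing R]

/-- Grassmann's bracket `[τ x y]` over a commutative ring: the tuple `τ` consists of the columns of
`M` other than `p` and `q`, while `x` and `y` take the places `p` and `q`. The columns `p` and `q`
of `M` itself are ignored. -/
def columnBracket (M : Matrix n n R) (p q : n) (x y : n → R) : R :=
  ((M.updateCol p x).updateCol q y).det

theorem sum_det_updateCol_mul_det_updateCol_col (A B : Matrix n n R) (p : n) (v : n → R) :
    ∑ j, (A.updateCol j v).det * (B.updateCol p (A.col j)).det =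
      A.det * (B.updateCol p v).det := by
  have cramer_expansion : ∑ j, A.cramer v j • A.col j = A.det • v := by
    simpa only [mulVec_eq_sum, op_smul_eq_smul, col] using mulVec_cramer A v
  simp only [← cramer_apply]
  simpa only [map_sum, map_smul, Finset.sum_apply, Pi.smul_apply, smul_eq_mul]
    using congrFun (congrArg B.cramer cramer_expansion) p

theorem columnBracket_swap (M : Matrix n n R) {p q : n} (hpq : p ≠ q) (x y : n → R) :
    columnBracket M p q y x = -columnBracket M p q x y := by
  have columns_swapped : (M.updateCol p y).updateCol q x =
      ((M.updateCol p x).updateCol q y).submatrix id (Equiv.swap p q) := by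
    ext i j
    simp only [submatrix_apply, updateCol_apply, Equiv.swap_apply_def, id]
    grind
  rw [columnBracket, columns_swapped, det_permute', Equiv.Perm.sign_swap hpq]
  simp [columnBracket]

theorem columnBracket_mul_columnBracket (M : Matrix n n R) {p q : n} (hpq : p ≠ q)
    (a b c d : n → R) :
    columnBracket M p q a b * columnBracket M p q c d =
      columnBracket M p q c b * columnBracket M p q a d +
        columnBracket M p q a c * columnBracket M p q b d := by
  set A := (M.updateCol p a).updateCol q b
  set B := M.updateCol q d
  have bracket_eq_B (x : n → R) : columnBracket M p q x d = (B.updateCol p x).det := by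
    rw [columnBracket, updateCol_comm _ hpq]
  have other_terms_vanish (j : n) (hj : j ≠ p ∧ j ≠ q) :
      (A.updateCol j c).det * (B.updateCol p (A.col j)).det = 0 := by
    have repeated_column : (B.updateCol p (A.col j)).det = 0 :=
      det_zero_of_column_eq hj.1 fun i => by simp [A, B, hj]
    rw [repeated_column, mul_zero]
  have exchange := sum_det_updateCol_mul_det_updateCol_col A B p c
  rw [Fintype.sum_eq_add p q hpq other_terms_vanish] at exchange
  have col_p : A.col p = a := by ext i; simp [A, hpq]
  have col_q : A.col q = b := by ext i; simp [A]
  have update_p : (A.updateCol p c).det = columnBracket M p q c b := by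
    simp [A, columnBracket, updateCol_comm _ hpq]
  have update_q : (A.updateCol q c).det = columnBracket M p q a c := by
    simp [A, columnBracket]
  rw [col_p, col_q, update_p, update_q] at exchange
  simp only [← bracket_eq_B] at exchange
  exact exchange.symm

theorem grassmann_pluecker_general (M : Matrix n n R) {p q : n} (hpq : p ≠ q)
    (a b c d : n → R) :
    columnBracket M p q a b * columnBracket M p q c d
      - columnBracket M p q a c * columnBracket M p q b d
      + columnBracket M p q a d * columnBracket M p q b c = 0 := by
  linear_combination columnBracket_mul_columnBracket M hpq a b c d
    + columnBracket M p q a d * columnBracket_swap M hpq b c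

end ColumnBracket

theorem bracket_eq_columnBracket {r : ℕ} (hr : 2 ≤ r) (w : Fin (r - 2) → (Fin r → ℝ))
    (x y : Fin r → ℝ) :
    bracket r w x y =
      columnBracket (Matrix.of fun i j : Fin r => if h : (j : ℕ) < r - 2 then w ⟨j, h⟩ i else 0)
        ⟨r - 2, by omega⟩ ⟨r - 1, by omega⟩ x y := by
  unfold bracket columnBracket
  congr 1
  ext i j
  simp only [Matrix.of_apply, Matrix.updateCol_apply, Fin.ext_iff]
  grind

/-- Three-term Grassmann–Plücker relation for real point configurations. -/
theorem grassmann_pluecker (r : ℕ) (hr : 2 ≤ r) (w : Fin (r - 2) → (Fin r → ℝ))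
    (a b c d : Fin r → ℝ) :
    bracket r w a b * bracket r w c d - bracket r w a c * bracket r w b d
      + bracket r w a d * bracket r w b c = 0 := by
  simp only [bracket_eq_columnBracket hr]
  exact grassmann_pluecker_general _ (by grind) a b c d
end

section
/- Let r ≥ 2, let w : Fin (r-2) → (Fin r → ℝ), and for x, y ∈ (Fin r → ℝ) write [x y] for the determinant of the r×r real matrix whose first r−2 columns are w 0, …, w (r−3) and last two columns are x and y. For any vectors a, b, c, d ∈ (Fin r → ℝ) there exists a permutation (a', b', c', d') of (a, b, c, d) such that [a' b']·[c' d'] ≥ 0, [a' c']·[b' d'] ≥ 0 and [a' d']·[b' c'] ≥ 0. -/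
/-!
Applying Cramer's rule `[a c] • b = ∑ k, (det with k-th column replaced by b) • (k-th column)`
and then the linear form `[· d]` kills every term but the two coming from the last two columns,
which leaves the Grassmann–Plücker relation `[a c][b d] = [a b][c d] + [a d][b c]`. So the second
inequality of a normalized quadruple follows from the other two. Now consider the three products
`[a b][c d]`, `[a c][d b]`, `[a d][b c]`, which are permuted cyclically by rotating `(b, c, d)`.
Two of them have the same sign, and after a rotation these are the first and the third; exchanging
`b` and `d` interchanges these two and negates both, so they can be made nonnegative.
-/

open Equiv Matrix

section Determinant

variable {n R : Type*} [Fintype n] [DecidableEq n] [CommRing R]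

theorem det_mul_det_updateCol_eq_sum (A N : Matrix n n R) (i : n) (b : n → R) :
    A.det * (N.updateCol i b).det =
      ∑ k, (A.updateCol k b).det * (N.updateCol i (A.col k)).det := by
  have cramer_rule : A.det • b = ∑ k, (A.updateCol k b).det • A.col k := by
    rw [← mulVec_cramer, mulVec_eq_sum]
    simp only [op_smul_eq_smul, cramer_apply]
    rfl
  calc
    A.det * (N.updateCol i b).det = N.cramer (A.det • b) i := by
      rw [map_smul, Pi.smul_apply, smul_eq_mul, cramer_apply]
    _ = ∑ k, (A.updateCol k b).det * (N.updateCol i (A.col k)).det := by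
      simp only [cramer_rule, map_sum, map_smul, Finset.sum_apply, Pi.smul_apply, smul_eq_mul,
        ← cramer_apply N]

theorem det_updateCol_updateCol_swap (M : Matrix n n R) {i j : n} (hij : i ≠ j) (x y : n → R) :
    ((M.updateCol i y).updateCol j x).det = -((M.updateCol i x).updateCol j y).det := by
  have columns_swapped : (M.updateCol i y).updateCol j x =
      ((M.updateCol i x).updateCol j y).submatrix id (swap i j) := by
    ext k l
    simp only [submatrix_apply, updateCol_apply, swap_apply_def, id]
    grind
  rw [columns_swapped, det_permute', Perm.sign_swap hij, Units.val_neg, Units.val_one,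
    Int.cast_neg, Int.cast_one, neg_one_mul]

theorem det_updateCol_updateCol_plucker (M : Matrix n n R) {i j : n} (hij : i ≠ j)
    (a b c d : n → R) :
    ((M.updateCol i a).updateCol j c).det * ((M.updateCol i b).updateCol j d).det =
      ((M.updateCol i a).updateCol j b).det * ((M.updateCol i c).updateCol j d).det +
        ((M.updateCol i a).updateCol j d).det * ((M.updateCol i b).updateCol j c).det := by
  set A := (M.updateCol i a).updateCol j c with hA
  have replace_i (x : n → R) : A.updateCol i x = (M.updateCol i x).updateCol j c := by
    rw [hA, updateCol_comm _ hij.symm, updateCol_idem]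
  have replace_j (x : n → R) : A.updateCol j x = (M.updateCol i a).updateCol j x :=
    updateCol_idem ..
  have col_i : A.col i = a := by ext; simp [hA, hij]
  have col_j : A.col j = c := by ext; simp [hA]
  have other_terms (k : n) (hk : k ≠ i ∧ k ≠ j) :
      (A.updateCol k b).det * ((M.updateCol j d).updateCol i (A.col k)).det = 0 := by
    have col_k : A.col k = (M.updateCol j d).col k := by ext; simp [hA, hk]
    rw [col_k]
    exact mul_eq_zero_of_right _ (det_updateCol_eq_zero hk.1)
  have exchange := det_mul_det_updateCol_eq_sum A (M.updateCol j d) i b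
  rw [Fintype.sum_eq_add i j hij other_terms, col_i, col_j, replace_i, replace_j] at exchange
  simp only [updateCol_comm M hij.symm] at exchange
  rw [exchange]
  ring

end Determinant

section Normalization

variable {α R : Type*}

/-- The paper's notion of a `χ`-normalized quadruple, for a function `χ` of two arguments: the
common index sequence `τ` of the paper is absorbed into `χ`. -/
def IsNormalized [Zero R] [Mul R] [LE R] (χ : α → α → R) (v : Fin 4 → α) : Prop :=
  χ (v 0) (v 1) * χ (v 2) (v 3) ≥ 0 ∧
    χ (v 0) (v 2) * χ (v 1) (v 3) ≥ 0 ∧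
      χ (v 0) (v 3) * χ (v 1) (v 2) ≥ 0

theorem isNormalized_of_plucker [Semiring R] [PartialOrder R] [IsOrderedRing R] {χ : α → α → R}
    (plucker : ∀ a b c d, χ a c * χ b d = χ a b * χ c d + χ a d * χ b c) {v : Fin 4 → α}
    (h₁ : 0 ≤ χ (v 0) (v 1) * χ (v 2) (v 3)) (h₃ : 0 ≤ χ (v 0) (v 3) * χ (v 1) (v 2)) :
    IsNormalized χ v :=
  ⟨h₁, (plucker ..).symm ▸ add_nonneg h₁ h₃, h₃⟩

variable [Ring R] [LinearOrder R] [IsStrictOrderedRing R] {χ : α → α → R}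

theorem mul_nonneg_or_mul_nonneg_or_mul_nonneg (x y z : R) :
    0 ≤ x * y ∨ 0 ≤ y * z ∨ 0 ≤ z * x := by
  simp only [mul_nonneg_iff]
  grind

theorem exists_perm_isNormalized_of_mul_nonneg (antisymm : ∀ a b, χ b a = -χ a b)
    (plucker : ∀ a b c d, χ a c * χ b d = χ a b * χ c d + χ a d * χ b c) {v : Fin 4 → α}
    (same_sign : 0 ≤ χ (v 0) (v 1) * χ (v 2) (v 3) * (χ (v 0) (v 3) * χ (v 1) (v 2))) :
    ∃ σ : Perm (Fin 4), IsNormalized χ (v ∘ σ) := by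
  rcases mul_nonneg_iff.mp same_sign with ⟨h₁, h₃⟩ | ⟨h₁, h₃⟩
  · exact ⟨1, isNormalized_of_plucker plucker h₁ h₃⟩
  · refine ⟨swap 1 3, isNormalized_of_plucker plucker ?_ ?_⟩
    · change 0 ≤ χ (v 0) (v 3) * χ (v 2) (v 1)
      rwa [antisymm (v 1), mul_neg, Left.nonneg_neg_iff]
    · change 0 ≤ χ (v 0) (v 1) * χ (v 3) (v 2)
      rwa [antisymm (v 2), mul_neg, Left.nonneg_neg_iff]

theorem exists_perm_isNormalized (antisymm : ∀ a b, χ b a = -χ a b)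
    (plucker : ∀ a b c d, χ a c * χ b d = χ a b * χ c d + χ a d * χ b c) (v : Fin 4 → α) :
    ∃ σ : Perm (Fin 4), IsNormalized χ (v ∘ σ) := by
  suffices rotated : ∃ ρ : Perm (Fin 4),
      0 ≤ χ (v (ρ 0)) (v (ρ 1)) * χ (v (ρ 2)) (v (ρ 3)) *
        (χ (v (ρ 0)) (v (ρ 3)) * χ (v (ρ 1)) (v (ρ 2))) by
    obtain ⟨ρ, same_sign⟩ := rotated
    obtain ⟨σ, hσ⟩ :=
      exists_perm_isNormalized_of_mul_nonneg antisymm plucker (v := v ∘ ρ) same_sign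
    exact ⟨ρ * σ, hσ⟩
  rcases mul_nonneg_or_mul_nonneg_or_mul_nonneg (χ (v 0) (v 3) * χ (v 1) (v 2))
    (χ (v 0) (v 2) * χ (v 3) (v 1)) (χ (v 0) (v 1) * χ (v 2) (v 3)) with h | h | h
  · exact ⟨c[1, 3, 2], h⟩
  · exact ⟨c[1, 2, 3], h⟩
  · exact ⟨1, h⟩

end Normalization

section Bracket

variable {r : ℕ}

theorem exists_bracket_eq_det_updateCol (hr : 2 ≤ r) (w : Fin (r - 2) → (Fin r → ℝ)) :
    ∃ (M : Matrix (Fin r) (Fin r) ℝ) (i j : Fin r), i ≠ j ∧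
      ∀ x y, bracket r w x y = ((M.updateCol i x).updateCol j y).det := by
  refine ⟨of fun k l ↦ if h : (l : ℕ) < r - 2 then w ⟨l, h⟩ k else 0,
    ⟨r - 2, by lia⟩, ⟨r - 1, by lia⟩, by simp only [ne_eq, Fin.mk.injEq]; lia, fun x y ↦ ?_⟩
  rw [bracket]
  congr 1
  ext k l
  simp only [updateCol_apply, of_apply, Fin.ext_iff]
  grind

theorem bracket_swap (hr : 2 ≤ r) (w : Fin (r - 2) → (Fin r → ℝ)) (x y : Fin r → ℝ) :
    bracket r w y x = -bracket r w x y := by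
  obtain ⟨M, i, j, hij, bracket_eq⟩ := exists_bracket_eq_det_updateCol hr w
  simpa only [bracket_eq] using det_updateCol_updateCol_swap M hij x y

theorem bracket_plucker (hr : 2 ≤ r) (w : Fin (r - 2) → (Fin r → ℝ)) (a b c d : Fin r → ℝ) :
    bracket r w a c * bracket r w b d =
      bracket r w a b * bracket r w c d + bracket r w a d * bracket r w b c := by
  obtain ⟨M, i, j, hij, bracket_eq⟩ := exists_bracket_eq_det_updateCol hr w
  simpa only [bracket_eq] using det_updateCol_updateCol_plucker M hij a b c d

end Bracket

/-- Any quadruple can be permuted into a normalized one. -/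
theorem exists_normalized_permutation (r : ℕ) (hr : 2 ≤ r)
    (w : Fin (r - 2) → (Fin r → ℝ)) (a b c d : Fin r → ℝ) :
    ∃ σ : Equiv.Perm (Fin 4),
      bracket r w (![a, b, c, d] (σ 0)) (![a, b, c, d] (σ 1)) *
          bracket r w (![a, b, c, d] (σ 2)) (![a, b, c, d] (σ 3)) ≥ 0 ∧
        bracket r w (![a, b, c, d] (σ 0)) (![a, b, c, d] (σ 2)) *
            bracket r w (![a, b, c, d] (σ 1)) (![a, b, c, d] (σ 3)) ≥ 0 ∧
          bracket r w (![a, b, c, d] (σ 0)) (![a, b, c, d] (σ 3)) *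
              bracket r w (![a, b, c, d] (σ 1)) (![a, b, c, d] (σ 2)) ≥ 0 :=
  exists_perm_isNormalized (bracket_swap hr w) (bracket_plucker hr w) ![a, b, c, d]
end

section
/- Fix r ≥ 2. Let I be a nonempty finite index set and J a finite index set (possibly empty). For each i ∈ I ∪ J suppose given vectors wᵢ : Fin (r-2) → (Fin r → ℝ) and aᵢ, bᵢ, cᵢ, dᵢ ∈ (Fin r → ℝ), and write [x y]ᵢ for the determinant of the r×r real matrix whose first r−2 columns are wᵢ 0, …, wᵢ (r−3) and last two columns are x and y; set Pᵢ = [aᵢ bᵢ]ᵢ·[cᵢ dᵢ]ᵢ, Rᵢ = [aᵢ cᵢ]ᵢ·[bᵢ dᵢ]ᵢ, Qᵢ = [aᵢ dᵢ]ᵢ·[bᵢ cᵢ]ᵢ. Assume for every i ∈ I that Pᵢ ≥ 0 and Qᵢ > 0, and for every j ∈ J that Pⱼ = 0 and Qⱼ ≠ 0. Then (∏_{i∈I} Pᵢ)·(∏_{j∈J} Qⱼ) ≠ (∏_{i∈I} Rᵢ)·(∏_{j∈J} Rⱼ). -/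
/-!
Each triple obeys the three-term Grassmann–Plücker relation `P + Q = R`. It comes from Cramer's
rule: expanding `[a b] • c` in the columns of the matrix of `[a b]` and applying the linear form
`[· d]` annihilates every column but `a` and `b`. So `0 ≤ P < R` on the strict part, which makes
the product of the `P` strictly smaller than that of the `R`, while `Q = R ≠ 0` on the degenerate
part.
-/

section ColBracket

variable {K n : Type*} [CommRing K] [Fintype n] [DecidableEq n]

/-- The bracket `[x y]` relative to a frame matrix `A` and two of its column positions: the
determinant of `A` with columns `p` and `q` replaced by `x` and `y`. The original columns `p` and
`q` of `A` are irrelevant when `p ≠ q`; if `p = q`, then `y` overwrites `x`. -/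
def colBracket (A : Matrix n n K) (p q : n) (x y : n → K) : K :=
  ((A.updateCol p x).updateCol q y).det

variable (A : Matrix n n K) {p q : n}

theorem colBracket_eq_cramer_left (hpq : p ≠ q) (x y : n → K) :
    colBracket A p q x y = (A.updateCol q y).cramer x p := by
  rw [colBracket, A.updateCol_comm hpq, Matrix.cramer_apply]

theorem colBracket_smul_left (hpq : p ≠ q) (k : K) (x y : n → K) :
    colBracket A p q (k • x) y = k * colBracket A p q x y := by
  simp only [colBracket_eq_cramer_left A hpq, map_smul, Pi.smul_apply, smul_eq_mul]

theorem colBracket_swap (hpq : p ≠ q) (x y : n → K) :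
    colBracket A p q y x = -colBracket A p q x y := by
  have hcols : (A.updateCol p y).updateCol q x =
      ((A.updateCol p x).updateCol q y).submatrix id (Equiv.swap p q) := by
    ext i j
    rcases eq_or_ne j p with rfl | hjp
    · simp [hpq]
    rcases eq_or_ne j q with rfl | hjq
    · simp [hpq]
    · simp [Equiv.swap_apply_of_ne_of_ne, hjp, hjq]
  rw [colBracket, hcols, Matrix.det_permute', Equiv.Perm.sign_swap hpq]
  simp [colBracket]

theorem colBracket_col_eq_zero (hpq : p ≠ q) {j : n} (hjp : j ≠ p) (hjq : j ≠ q) (y : n → K) :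
    colBracket A p q (A.col j) y = 0 := by
  have hcol : A.col j = fun i => (A.updateCol q y) i j := by
    ext i
    simp [hjq]
  rw [colBracket, A.updateCol_comm hpq, hcol, Matrix.det_updateCol_eq_zero hjp]

theorem colBracket_mulVec_updateCol (hpq : p ≠ q) (a b v y : n → K) :
    colBracket A p q (((A.updateCol p a).updateCol q b).mulVec v) y =
      v p * colBracket A p q a y + v q * colBracket A p q b y := by
  set M := (A.updateCol p a).updateCol q b with hM
  have hp : M.col p = a := by ext i; simp [hM, hpq]
  have hq : M.col q = b := by ext i; simp [hM]
  have hne : ∀ j, j ≠ p ∧ j ≠ q → v j * colBracket A p q (M.col j) y = 0 := by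
    rintro j ⟨hjp, hjq⟩
    have hj : M.col j = A.col j := by ext i; simp [hM, hjp, hjq]
    rw [hj, colBracket_col_eq_zero A hpq hjp hjq, mul_zero]
  calc
    colBracket A p q (M.mulVec v) y = ∑ j, v j * colBracket A p q (M.col j) y := by
      simp only [colBracket_eq_cramer_left A hpq, Matrix.mulVec_eq_sum, map_sum, Finset.sum_apply,
        op_smul_eq_smul, map_smul, Pi.smul_apply, smul_eq_mul, Matrix.col_def]
    _ = v p * colBracket A p q a y + v q * colBracket A p q b y := by
      rw [Fintype.sum_eq_add p q hpq hne, hp, hq]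

theorem colBracket_grassmann_plucker (hpq : p ≠ q) (a b c d : n → K) :
    colBracket A p q a b * colBracket A p q c d + colBracket A p q a d * colBracket A p q b c =
      colBracket A p q a c * colBracket A p q b d := by
  set M := (A.updateCol p a).updateCol q b with hM
  have hp : M.cramer c p = colBracket A p q c b := by
    rw [hM, A.updateCol_comm hpq, Matrix.cramer_apply, Matrix.updateCol_idem,
      ← A.updateCol_comm hpq, colBracket]
  have hq : M.cramer c q = colBracket A p q a c := by
    rw [hM, Matrix.cramer_apply, Matrix.updateCol_idem, colBracket]
  calc
    colBracket A p q a b * colBracket A p q c d + colBracket A p q a d * colBracket A p q b c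
    _ = colBracket A p q (M.det • c) d + colBracket A p q a d * colBracket A p q b c := by
      rw [colBracket_smul_left A hpq, ← colBracket]
    _ = colBracket A p q c b * colBracket A p q a d + colBracket A p q a c * colBracket A p q b d +
          colBracket A p q a d * colBracket A p q b c := by
      rw [← Matrix.mulVec_cramer, colBracket_mulVec_updateCol A hpq, hp, hq]
    _ = colBracket A p q a c * colBracket A p q b d := by
      rw [colBracket_swap A hpq b c]
      ring

end ColBracket

theorem prod_lt_prod_of_nonneg {ι K : Type*} [CommSemiring K] [PartialOrder K]
    [IsStrictOrderedRing K] {s : Finset ι} (hs : s.Nonempty) {f g : ι → K}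
    (hf : ∀ i ∈ s, 0 ≤ f i) (hfg : ∀ i ∈ s, f i < g i) : ∏ i ∈ s, f i < ∏ i ∈ s, g i := by
  induction hs using Finset.Nonempty.cons_induction with
  | singleton i => simpa using hfg i
  | cons i s hi _ ih =>
    rw [Finset.forall_mem_cons] at hf hfg
    rw [Finset.prod_cons, Finset.prod_cons]
    exact mul_lt_mul'' hfg.1 (ih hf.2 hfg.2) hf.1 (Finset.prod_nonneg hf.2)

theorem no_biquadratic_final_polynomial_general {K n ι κ : Type*} [CommRing K] [LinearOrder K]
    [IsStrictOrderedRing K] [Fintype n] [DecidableEq n] [Fintype ι] [Fintype κ] [Nonempty ι]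
    (A : ι ⊕ κ → Matrix n n K) {p q : n} (hpq : p ≠ q) (a b c d : ι ⊕ κ → n → K)
    (P R Q : ι ⊕ κ → K)
    (hPdef : ∀ e, P e = colBracket (A e) p q (a e) (b e) * colBracket (A e) p q (c e) (d e))
    (hRdef : ∀ e, R e = colBracket (A e) p q (a e) (c e) * colBracket (A e) p q (b e) (d e))
    (hQdef : ∀ e, Q e = colBracket (A e) p q (a e) (d e) * colBracket (A e) p q (b e) (c e))
    (hI : ∀ i, 0 ≤ P (Sum.inl i) ∧ 0 < Q (Sum.inl i))
    (hJ : ∀ j, P (Sum.inr j) = 0 ∧ Q (Sum.inr j) ≠ 0) :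
    (∏ i, P (Sum.inl i)) * ∏ j, Q (Sum.inr j) ≠ (∏ i, R (Sum.inl i)) * ∏ j, R (Sum.inr j) := by
  have hPQR : ∀ e, P e + Q e = R e := fun e => by
    rw [hPdef, hQdef, hRdef, colBracket_grassmann_plucker (A e) hpq]
  have hstrict : ∏ i, P (Sum.inl i) < ∏ i, R (Sum.inl i) :=
    prod_lt_prod_of_nonneg Finset.univ_nonempty (fun i _ => (hI i).1) fun i _ => by
      rw [← hPQR]
      exact lt_add_of_pos_right _ (hI i).2
  have hdegenerate : ∏ j, R (Sum.inr j) = ∏ j, Q (Sum.inr j) :=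
    Finset.prod_congr rfl fun j _ => by rw [← hPQR, (hJ j).1, zero_add]
  have hQ : ∏ j, Q (Sum.inr j) ≠ 0 := Finset.prod_ne_zero_iff.2 fun j _ => (hJ j).2
  rw [hdegenerate]
  exact fun h => hstrict.ne (mul_right_cancel₀ hQ h)

/-- The frame matrix of `bracket r w`: its first `r - 2` columns are those of `w`, and the two
columns that the bracket fills in are zero. -/
def bracketFrame {K : Type*} [Zero K] (r : ℕ) (w : Fin (r - 2) → Fin r → K) :
    Matrix (Fin r) (Fin r) K :=
  Matrix.of fun i j => if h : (j : ℕ) < r - 2 then w ⟨j, h⟩ i else 0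

theorem bracket_eq_colBracket {r : ℕ} (hr : 2 ≤ r) (w : Fin (r - 2) → Fin r → ℝ)
    (x y : Fin r → ℝ) :
    bracket r w x y =
      colBracket (bracketFrame r w) ⟨r - 2, by omega⟩ ⟨r - 1, by omega⟩ x y := by
  rw [bracket, colBracket]
  congr 1
  ext i j
  simp only [bracketFrame, Matrix.of_apply, Matrix.updateCol_apply, Fin.ext_iff]
  split_ifs <;> first | rfl | omega

/-- A biquadratic final polynomial identity cannot hold in any realization. -/
theorem no_biquadratic_final_polynomial (r : ℕ) (hr : 2 ≤ r)
    (ι κ : Type) [Fintype ι] [Fintype κ] [Nonempty ι]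
    (w : ι ⊕ κ → Fin (r - 2) → (Fin r → ℝ))
    (a b c d : ι ⊕ κ → Fin r → ℝ)
    (P : ι ⊕ κ → ℝ) (R : ι ⊕ κ → ℝ) (Q : ι ⊕ κ → ℝ)
    (hPdef : ∀ e, P e = bracket r (w e) (a e) (b e) * bracket r (w e) (c e) (d e))
    (hRdef : ∀ e, R e = bracket r (w e) (a e) (c e) * bracket r (w e) (b e) (d e))
    (hQdef : ∀ e, Q e = bracket r (w e) (a e) (d e) * bracket r (w e) (b e) (c e))
    (hI : ∀ i : ι, P (Sum.inl i) ≥ 0 ∧ Q (Sum.inl i) > 0)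
    (hJ : ∀ j : κ, P (Sum.inr j) = 0 ∧ Q (Sum.inr j) ≠ 0) :
    (∏ i : ι, P (Sum.inl i)) * (∏ j : κ, Q (Sum.inr j)) ≠
      (∏ i : ι, R (Sum.inl i)) * (∏ j : κ, R (Sum.inr j)) := by
  simp only [bracket_eq_colBracket hr] at hPdef hRdef hQdef
  exact no_biquadratic_final_polynomial_general (fun e => bracketFrame r (w e))
    (by simp only [ne_eq, Fin.mk.injEq]; omega) a b c d P R Q hPdef hRdef hQdef hI hJ
end
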